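/- arXiv:2409.00405 — 5 statements merged into one kernel-verified Lean document; each statement's English description precedes it below -/
import Mathlib

section
/- Let f > 0, g > 0 be real numbers and let θ be a real number with 0 ≤ θ < 1. Then ln(1 + f/g) ≤ (1 − θ)·(f/g) − (θ + ln(1 − θ)). -/
/-- Lagrangian dual transform upper bound (Lemma 2, first inequality):
for positive reals `f, g` and `θ ∈ [0,1)`,
`ln(1 + f/g) ≤ (1 − θ)(f/g) − (θ + ln(1 − θ))`. -/
theorem lagrangian_dual_transform_upper_bound (f g θ : ℝ) (hf : 0 < f) (hg : 0 < g)
    (hθ0 : 0 ≤ θ) (hθ1 : θ < 1) :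
    Real.log (1 + f / g) ≤ (1 - θ) * (f / g) - (θ + Real.log (1 - θ)) := by
  have hx : 0 < 1 + f / g := by positivity
  have ht : 0 < 1 - θ := by linarith
  have h := Real.log_le_sub_one_of_pos (mul_pos ht hx)
  rw [Real.log_mul ht.ne' hx.ne'] at h
  linarith
end

section
/- Let f > 0 and g > 0 be real numbers, and set θ* = f/(f + g). Then 0 ≤ θ* < 1 and ln(1 + f/g) = (1 − θ*)·(f/g) − (θ* + ln(1 − θ*)); moreover, for every θ ∈ [0,1) one has (1 − θ)·(f/g) − (θ + ln(1 − θ)) ≥ ln(1 + f/g), with equality only at θ = θ*. -/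
/-- Lagrangian dual transform tightness (Lemma 2, first equality):
the bound `(1 − θ)(f/g) − (θ + ln(1 − θ))` on `ln(1 + f/g)` is achieved
exactly at `θ* = f/(f+g)`. -/
theorem lagrangian_dual_transform_tight (f g : ℝ) (hf : 0 < f) (hg : 0 < g) :
    (0 ≤ f / (f + g) ∧ f / (f + g) < 1) ∧
    (Real.log (1 + f / g) =
      (1 - f / (f + g)) * (f / g) - (f / (f + g) + Real.log (1 - f / (f + g)))) ∧
    (∀ θ : ℝ, 0 ≤ θ → θ < 1 →
      (1 - θ) * (f / g) - (θ + Real.log (1 - θ)) ≥ Real.log (1 + f / g) ∧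
      ((1 - θ) * (f / g) - (θ + Real.log (1 - θ)) = Real.log (1 + f / g) →
        θ = f / (f + g))) := by
  have hfg : 0 < f + g := by positivity
  have hr : 0 < 1 + f / g := by positivity
  refine ⟨⟨by positivity, by rw [div_lt_one hfg]; linarith⟩, ?_, ?_⟩
  · have h1 : 1 - f / (f + g) = (1 + f / g)⁻¹ := by
      field_simp
      ring
    have h2 : (1 - f / (f + g)) * (f / g) = f / (f + g) := by
      field_simp
      ring
    rw [h2, h1, Real.log_inv]
    ring
  · intro θ _ h1
    have ht : 0 < 1 - θ := by linarith
    have hx : 0 < (1 - θ) * (1 + f / g) := mul_pos ht hr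
    have hl : Real.log ((1 - θ) * (1 + f / g)) = Real.log (1 - θ) + Real.log (1 + f / g) :=
      Real.log_mul ht.ne' hr.ne'
    refine ⟨?_, ?_⟩
    · have := Real.log_le_sub_one_of_pos hx
      linarith
    · intro h
      by_contra hne
      have hx1 : (1 - θ) * (1 + f / g) ≠ 1 := by
        intro h3
        apply hne
        field_simp at h3 ⊢
        linarith
      have := Real.log_lt_sub_one_of_pos hx hx1
      linarith
end

section
/- Let f > 0, g > 0 and ρ ≥ 0 be real numbers such that 2ρ√g − ρ²f > 0. Then f/g ≤ 1/(2ρ√g − ρ²f). -/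
/-- Inverse quadratic transform upper bound (Lemma 2, second inequality):
for positive reals `f, g` and `ρ ≥ 0` with `2ρ√g − ρ²f > 0`,
`f/g ≤ 1/(2ρ√g − ρ²f)`. -/
theorem inverse_quadratic_transform_upper_bound (f g ρ : ℝ) (hf : 0 < f) (hg : 0 < g)
    (hρ : 0 ≤ ρ) (hpos : 0 < 2 * ρ * Real.sqrt g - ρ ^ 2 * f) :
    f / g ≤ 1 / (2 * ρ * Real.sqrt g - ρ ^ 2 * f) := by
  rw [div_le_div_iff₀ hg hpos]
  nlinarith [sq_nonneg (Real.sqrt g - ρ * f), Real.sq_sqrt hg.le]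
end

section
/- Let N be a positive natural number and let λ₀, ξ, α_SI, p, p_k, σ² be positive reals, and d_k, d_t positive reals. Let a_t, a_k ∈ ℂᴺ have all entries of modulus 1, let H_r = √(λ₀ ξ)·d_t⁻²·(a_t a_tᴴ), let H_SI ∈ ℂᴺˣᴺ have all entries of modulus √(α_SI), and let x = √(p/N)·a_t. Then (λ₀ p_k N d_k⁻²)/(‖(H_r + H_SI)x‖² + N σ²) ≥ (λ₀ p_k d_k⁻²)/((√(λ₀ ξ N)·d_t⁻² + √(α_SI N))² p + σ²). -/
open scoped BigOperators

/-- The Euclidean (ℓ²) norm of a complex vector indexed by `Fin N`. -/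
noncomputable def euclNorm {N : ℕ} (v : Fin N → ℂ) : ℝ :=
  Real.sqrt (∑ i, ‖v i‖ ^ 2)

/-- Lower bound `γ̃_k ≥ γ_k` on the uplink communication SINR. -/
theorem communication_sinr_lower_bound (N : ℕ) (hN : 0 < N)
    (lam0 xi alphaSI p pk sigma2 dk dt : ℝ)
    (hlam0 : 0 < lam0) (hxi : 0 < xi) (halphaSI : 0 < alphaSI) (hp : 0 < p)
    (hpk : 0 < pk) (hsigma2 : 0 < sigma2) (hdk : 0 < dk) (hdt : 0 < dt)
    (a_t a_k : Fin N → ℂ) (hat : ∀ i, ‖a_t i‖ = 1) (hak : ∀ i, ‖a_k i‖ = 1)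
    (Hr HSI : Matrix (Fin N) (Fin N) ℂ)
    (hHr : Hr = ((Real.sqrt (lam0 * xi) / dt ^ 2 : ℝ) : ℂ) •
      Matrix.vecMulVec a_t (star a_t))
    (hHSI : ∀ i j, ‖HSI i j‖ = Real.sqrt alphaSI)
    (x : Fin N → ℂ) (hx : x = (Real.sqrt (p / N) : ℂ) • a_t) :
    (lam0 * pk * N / dk ^ 2) / (euclNorm ((Hr + HSI).mulVec x) ^ 2 + N * sigma2) ≥
      (lam0 * pk / dk ^ 2) /
        ((Real.sqrt (lam0 * xi * N) / dt ^ 2 + Real.sqrt (alphaSI * N)) ^ 2 * p +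
          sigma2) := by
  have hN' : (0:ℝ) < N := by exact_mod_cast hN
  set c : ℝ := Real.sqrt (lam0 * xi) / dt ^ 2 with hc
  have hc0 : 0 ≤ c := by positivity
  set s : ℝ := Real.sqrt (p / N) with hs
  have hs0 : 0 ≤ s := Real.sqrt_nonneg _
  have hs2 : s ^ 2 = p / N := Real.sq_sqrt (by positivity)
  set b : ℝ := Real.sqrt alphaSI with hb
  have hb0 : 0 ≤ b := Real.sqrt_nonneg _
  have hrow : ∀ i, ‖((Hr + HSI).mulVec x) i‖ ≤ N * ((c + b) * s) := by
    intro i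
    have h1 : ∀ j ∈ Finset.univ, ‖(Hr + HSI) i j * x j‖ ≤ (c + b) * s := by
      intro j _
      have hxj : ‖x j‖ = s := by
        rw [hx, Pi.smul_apply, smul_eq_mul, norm_mul, hat, Complex.norm_real,
          Real.norm_of_nonneg hs0, mul_one]
      have hr : ‖Hr i j‖ = c := by
        rw [hHr, Matrix.smul_apply, Matrix.vecMulVec_apply, smul_eq_mul, norm_mul, norm_mul,
          Pi.star_apply, norm_star, hat, hat, Complex.norm_real, Real.norm_of_nonneg hc0]
        ring
      rw [norm_mul, hxj, Matrix.add_apply]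
      refine mul_le_mul_of_nonneg_right ?_ hs0
      calc ‖Hr i j + HSI i j‖ ≤ ‖Hr i j‖ + ‖HSI i j‖ := norm_add_le _ _
        _ = c + b := by rw [hr, hHSI]
    have h2 := norm_sum_le_of_le Finset.univ h1
    simpa [Matrix.mulVec, dotProduct] using h2
  have hnorm : euclNorm ((Hr + HSI).mulVec x) ^ 2 ≤ N * (N * (c + b) ^ 2 * p) := by
    unfold euclNorm
    rw [Real.sq_sqrt (by positivity)]
    calc ∑ i, ‖((Hr + HSI).mulVec x) i‖ ^ 2 ≤ ∑ _i : Fin N, (N * ((c + b) * s)) ^ 2 :=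
          Finset.sum_le_sum fun i _ => pow_le_pow_left₀ (norm_nonneg _) (hrow i) 2
      _ = N * (N ^ 2 * (c + b) ^ 2 * s ^ 2) := by
          simp only [Finset.sum_const, Finset.card_univ, Fintype.card_fin, nsmul_eq_mul]; ring
      _ = N * (N * (c + b) ^ 2 * p) := by
          rw [hs2]; field_simp
  have hden : (Real.sqrt (lam0 * xi * N) / dt ^ 2 + Real.sqrt (alphaSI * N)) ^ 2 * p
      = N * (c + b) ^ 2 * p := by
    rw [Real.sqrt_mul (mul_pos hlam0 hxi).le (N : ℝ), Real.sqrt_mul halphaSI.le (N : ℝ)]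
    have : Real.sqrt (lam0 * xi) * Real.sqrt N / dt ^ 2 + Real.sqrt alphaSI * Real.sqrt N
        = Real.sqrt N * (c + b) := by rw [hc, hb]; ring
    rw [this, mul_pow, Real.sq_sqrt hN'.le]
  rw [hden, ge_iff_le]
  have hE := sq_nonneg (euclNorm ((Hr + HSI).mulVec x))
  have hK : 0 < lam0 * pk / dk ^ 2 := by positivity
  rw [div_le_div_iff₀ (by positivity) (by positivity)]
  calc _ ≤ lam0 * pk / dk ^ 2 * (N * (N * (c + b) ^ 2 * p) + N * sigma2) := by gcongr
    _ = _ := by ring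
end

section
/- Let N be a positive natural number and let λ₀, ξ, α_SI, p, p_k, σ² be positive reals, and d_k, d_t positive reals. Let a_t ∈ ℂᴺ have all entries of modulus 1, let H_r = √(λ₀ ξ)·d_t⁻²·(a_t a_tᴴ), let H_SI ∈ ℂᴺˣᴺ have all entries of modulus √(α_SI), and let x = √(p/N)·a_t. Then ‖H_r x‖² / (λ₀ p_k N d_k⁻² + ‖H_SI x‖² + N σ²) ≥ (λ₀ ξ N p d_t⁻⁴)/(λ₀ p_k d_k⁻² + α_SI N p + σ²). -/
open scoped BigOperators

/-- Lower bound `γ̃_k^rad ≥ γ_k^rad` on the radar sensing SINR. -/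
theorem sensing_sinr_lower_bound (N : ℕ) (hN : 0 < N)
    (lam0 xi alphaSI p pk sigma2 dk dt : ℝ)
    (hlam0 : 0 < lam0) (hxi : 0 < xi) (halphaSI : 0 < alphaSI) (hp : 0 < p)
    (hpk : 0 < pk) (hsigma2 : 0 < sigma2) (hdk : 0 < dk) (hdt : 0 < dt)
    (a_t : Fin N → ℂ) (hat : ∀ i, ‖a_t i‖ = 1)
    (Hr HSI : Matrix (Fin N) (Fin N) ℂ)
    (hHr : Hr = ((Real.sqrt (lam0 * xi) / dt ^ 2 : ℝ) : ℂ) •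
      Matrix.vecMulVec a_t (star a_t))
    (hHSI : ∀ i j, ‖HSI i j‖ = Real.sqrt alphaSI)
    (x : Fin N → ℂ) (hx : x = (Real.sqrt (p / N) : ℂ) • a_t) :
    euclNorm (Hr.mulVec x) ^ 2 /
        (lam0 * pk * N / dk ^ 2 + euclNorm (HSI.mulVec x) ^ 2 + N * sigma2) ≥
      (lam0 * xi * N * p / dt ^ 4) /
        (lam0 * pk / dk ^ 2 + alphaSI * N * p + sigma2) := by
  have hNr : (0:ℝ) < N := by exact_mod_cast hN
  have key : ∀ v : Fin N → ℂ, euclNorm v ^ 2 = ∑ i, ‖v i‖ ^ 2 := fun v =>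
    Real.sq_sqrt (Finset.sum_nonneg fun i _ => sq_nonneg _)
  have hxn : ∀ i, ‖x i‖ = Real.sqrt (p / N) := by
    intro i
    rw [hx, Pi.smul_apply, norm_smul, hat i, mul_one, Complex.norm_real, Real.norm_eq_abs,
      abs_of_nonneg (Real.sqrt_nonneg _)]
  have hone : ∀ j, star (a_t j) * a_t j = 1 := by
    intro j
    have h := Complex.conj_mul' (a_t j)
    rw [hat j] at h
    simpa using h
  have hpN : Real.sqrt (p / N) ^ 2 = p / N := Real.sq_sqrt (by positivity)
  have hlx : Real.sqrt (lam0 * xi) ^ 2 = lam0 * xi := Real.sq_sqrt (by positivity)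
  have hal : Real.sqrt alphaSI ^ 2 = alphaSI := Real.sq_sqrt halphaSI.le
  have hri : ∀ i, Hr.mulVec x i = ((Real.sqrt (lam0 * xi) / dt ^ 2 * Real.sqrt (p / N) * N : ℝ) : ℂ)
      * a_t i := by
    intro i
    have h1 : ∀ j, Hr i j * x j = ((Real.sqrt (lam0 * xi) / dt ^ 2 : ℝ) : ℂ) *
        (Real.sqrt (p / N) : ℂ) * a_t i := by
      intro j
      rw [hHr, hx, Matrix.smul_apply, Matrix.vecMulVec_apply, Pi.smul_apply, Pi.star_apply,
        smul_eq_mul, smul_eq_mul]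
      linear_combination ((Real.sqrt (lam0 * xi) / dt ^ 2 : ℝ) : ℂ) *
        (Real.sqrt (p / N) : ℂ) * a_t i * hone j
    simp only [Matrix.mulVec, dotProduct]
    rw [Finset.sum_congr rfl fun j _ => h1 j, Finset.sum_const, Finset.card_univ,
      Fintype.card_fin, nsmul_eq_mul]
    push_cast
    ring
  have hnum : euclNorm (Hr.mulVec x) ^ 2 = N * (lam0 * xi * N * p / dt ^ 4) := by
    rw [key]
    have h2 : ∀ i, ‖Hr.mulVec x i‖ ^ 2 = lam0 * xi * N * p / dt ^ 4 := by
      intro i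
      rw [hri i, norm_mul, hat i, mul_one, Complex.norm_real, Real.norm_eq_abs, sq_abs,
        mul_pow, mul_pow, div_pow, hpN, hlx]
      field_simp
    rw [Finset.sum_congr rfl fun i _ => h2 i, Finset.sum_const, Finset.card_univ,
      Fintype.card_fin, nsmul_eq_mul]
  have hSI : euclNorm (HSI.mulVec x) ^ 2 ≤ N * (alphaSI * N * p) := by
    rw [key]
    have h3 : ∀ i, ‖HSI.mulVec x i‖ ^ 2 ≤ alphaSI * N * p := by
      intro i
      have h4 : ‖HSI.mulVec x i‖ ≤ N * (Real.sqrt alphaSI * Real.sqrt (p / N)) := by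
        simp only [Matrix.mulVec, dotProduct]
        refine (norm_sum_le _ _).trans (le_of_eq ?_)
        simp [hHSI, hxn]
      calc ‖HSI.mulVec x i‖ ^ 2 ≤ (N * (Real.sqrt alphaSI * Real.sqrt (p / N))) ^ 2 :=
            pow_le_pow_left₀ (norm_nonneg _) h4 2
        _ = alphaSI * N * p := by
            rw [mul_pow, mul_pow, hal, hpN]
            field_simp
    refine (Finset.sum_le_sum fun i _ => h3 i).trans (le_of_eq ?_)
    rw [Finset.sum_const, Finset.card_univ, Fintype.card_fin, nsmul_eq_mul]
  have hD : lam0 * pk * N / dk ^ 2 + euclNorm (HSI.mulVec x) ^ 2 + N * sigma2 ≤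
      N * (lam0 * pk / dk ^ 2 + alphaSI * N * p + sigma2) := by
    have : lam0 * pk * N / dk ^ 2 = N * (lam0 * pk / dk ^ 2) := by ring
    rw [this]
    linarith
  rw [ge_iff_le, hnum, ← mul_div_mul_left _ _ hNr.ne']
  exact div_le_div_of_nonneg_left (by positivity) (by positivity) hD
end
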